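/- arXiv:0906.0037 — 5 statements merged into one kernel-verified Lean document; each statement's English description precedes it below -/
import Mathlib

section
/- Let m, n be positive integers, A an m×n complex matrix and B an n×m complex matrix, and let z ∈ ℂ be nonzero and such that both A·B − z·I_m and B·A − z·I_n are invertible. Then tr((A·B − z·I_m)⁻¹) − tr((B·A − z·I_n)⁻¹) = (n − m)/z. Equivalently, the finite-dimensional Stieltjes transforms G_{AB}(z) = (1/m)·tr((A·B − z·I_m)⁻¹) and G_{BA}(z) = (1/n)·tr((B·A − z·I_n)⁻¹) satisfy G_{AB}(z) = (n/m)·G_{BA}(z) − (1 − n/m)·(1/z). -/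
/-!
From `(AB - z)A = A(BA - z)` one gets `(AB - z)⁻¹A = A(BA - z)⁻¹`, so the trace of `AB(AB - z)⁻¹`
equals that of `BA(BA - z)⁻¹` by cyclicity. As `M(M - z)⁻¹ = 1 + z(M - z)⁻¹`, comparing the two
traces gives `m + z tr (AB - z)⁻¹ = n + z tr (BA - z)⁻¹`.
-/

open Matrix

section CommRing

variable {ι κ R : Type*} [Fintype ι] [Fintype κ] [DecidableEq ι] [DecidableEq κ] [CommRing R]

theorem inv_mul_eq_mul_inv_of_mul_eq_mul {M : Matrix ι ι R} {N : Matrix κ κ R} {A : Matrix ι κ R}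
    (hM : IsUnit M) (hN : IsUnit N) (h : M * A = A * N) : M⁻¹ * A = A * N⁻¹ := by
  rw [isUnit_iff_isUnit_det] at hM hN
  calc
    M⁻¹ * A = M⁻¹ * (A * N * N⁻¹) := by rw [mul_nonsing_inv_cancel_right _ _ hN]
    _ = M⁻¹ * (M * (A * N⁻¹)) := by rw [← h, Matrix.mul_assoc]
    _ = A * N⁻¹ := nonsing_inv_mul_cancel_left _ _ hM

theorem mul_sub_smul_one_mul (A : Matrix ι κ R) (B : Matrix κ ι R) (z : R) :
    (A * B - z • 1) * A = A * (B * A - z • 1) := by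
  simp [Matrix.sub_mul, Matrix.mul_sub, Matrix.mul_assoc]

theorem mul_inv_sub_smul_one {M : Matrix ι ι R} {z : R} (h : IsUnit (M - z • 1)) :
    M * (M - z • 1)⁻¹ = 1 + z • (M - z • 1)⁻¹ := by
  have h_inv := mul_nonsing_inv _ ((isUnit_iff_isUnit_det _).mp h)
  rwa [Matrix.sub_mul, smul_mul, Matrix.one_mul, sub_eq_iff_eq_add] at h_inv

theorem trace_mul_inv_sub_smul_one {M : Matrix ι ι R} {z : R} (h : IsUnit (M - z • 1)) :
    (M * (M - z • 1)⁻¹).trace = Fintype.card ι + z * (M - z • 1)⁻¹.trace := by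
  rw [mul_inv_sub_smul_one h, trace_add, trace_one, trace_smul, smul_eq_mul]

theorem trace_mul_mul_inv_sub_smul_one_comm {A : Matrix ι κ R} {B : Matrix κ ι R} {z : R}
    (hAB : IsUnit (A * B - z • 1)) (hBA : IsUnit (B * A - z • 1)) :
    (A * B * (A * B - z • 1)⁻¹).trace = (B * A * (B * A - z • 1)⁻¹).trace := by
  calc
    (A * B * (A * B - z • 1)⁻¹).trace = (B * ((A * B - z • 1)⁻¹ * A)).trace := by
      rw [trace_mul_cycle, trace_mul_comm]
    _ = (B * A * (B * A - z • 1)⁻¹).trace := by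
      rw [inv_mul_eq_mul_inv_of_mul_eq_mul hAB hBA (mul_sub_smul_one_mul A B z), Matrix.mul_assoc]

theorem card_add_mul_trace_inv_sub_smul_one_comm {A : Matrix ι κ R} {B : Matrix κ ι R} {z : R}
    (hAB : IsUnit (A * B - z • 1)) (hBA : IsUnit (B * A - z • 1)) :
    Fintype.card ι + z * (A * B - z • 1)⁻¹.trace =
      Fintype.card κ + z * (B * A - z • 1)⁻¹.trace := by
  rw [← trace_mul_inv_sub_smul_one hAB, ← trace_mul_inv_sub_smul_one hBA,
    trace_mul_mul_inv_sub_smul_one_comm hAB hBA]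

end CommRing

section Field

variable {ι κ K : Type*} [Fintype ι] [Fintype κ] [DecidableEq ι] [DecidableEq κ] [Field K]

/-- The Stieltjes transform `G_M(z)` of the spectral distribution of a square matrix, with the sign
convention `G_M(z) = |ι|⁻¹ tr (M - z)⁻¹`. It is meaningful only if `|ι| ≠ 0` in `K` and `M - z` is
invertible; otherwise its value is the junk value `0`. -/
noncomputable def stieltjesTransform (M : Matrix ι ι K) (z : K) : K :=
  1 / (Fintype.card ι : K) * (M - z • 1)⁻¹.trace

theorem trace_inv_mul_sub_smul_one_sub_trace {A : Matrix ι κ K} {B : Matrix κ ι K} {z : K}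
    (hz : z ≠ 0) (hAB : IsUnit (A * B - z • 1)) (hBA : IsUnit (B * A - z • 1)) :
    (A * B - z • 1)⁻¹.trace - (B * A - z • 1)⁻¹.trace =
      ((Fintype.card κ : K) - Fintype.card ι) / z := by
  rw [eq_div_iff hz]
  linear_combination card_add_mul_trace_inv_sub_smul_one_comm hAB hBA

theorem stieltjesTransform_mul_comm {A : Matrix ι κ K} {B : Matrix κ ι K} {z : K}
    (hι : (Fintype.card ι : K) ≠ 0) (hκ : (Fintype.card κ : K) ≠ 0) (hz : z ≠ 0)
    (hAB : IsUnit (A * B - z • 1)) (hBA : IsUnit (B * A - z • 1)) :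
    stieltjesTransform (A * B) z =
      (Fintype.card κ : K) / Fintype.card ι * stieltjesTransform (B * A) z -
        (1 - (Fintype.card κ : K) / Fintype.card ι) * (1 / z) := by
  simp only [stieltjesTransform]
  field_simp
  linear_combination card_add_mul_trace_inv_sub_smul_one_comm hAB hBA

theorem stmt1_general (hι : (Fintype.card ι : K) ≠ 0) (hκ : (Fintype.card κ : K) ≠ 0)
    (A : Matrix ι κ K) (B : Matrix κ ι K) {z : K} (hz : z ≠ 0)
    (hAB : IsUnit (A * B - z • 1)) (hBA : IsUnit (B * A - z • 1)) :
    (A * B - z • 1)⁻¹.trace - (B * A - z • 1)⁻¹.trace =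
        ((Fintype.card κ : K) - Fintype.card ι) / z ∧
      stieltjesTransform (A * B) z =
        (Fintype.card κ : K) / Fintype.card ι * stieltjesTransform (B * A) z -
          (1 - (Fintype.card κ : K) / Fintype.card ι) * (1 / z) :=
  ⟨trace_inv_mul_sub_smul_one_sub_trace hz hAB hBA,
    stieltjesTransform_mul_comm hι hκ hz hAB hBA⟩

end Field

/-- For an `m×n` complex matrix `A`, an `n×m` complex matrix `B`, and a
nonzero `z ∈ ℂ` such that `A·B − z·I_m` and `B·A − z·I_n` are invertible,
`tr((A·B − z·I_m)⁻¹) − tr((B·A − z·I_n)⁻¹) = (n − m)/z`; equivalently the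
finite-dimensional Stieltjes transforms satisfy
`G_{AB}(z) = (n/m)·G_{BA}(z) − (1 − n/m)·(1/z)`. -/
theorem stmt1 (m n : ℕ) (hm : 0 < m) (hn : 0 < n)
    (A : Matrix (Fin m) (Fin n) ℂ) (B : Matrix (Fin n) (Fin m) ℂ)
    (z : ℂ) (hz : z ≠ 0)
    (hAB : IsUnit (A * B - z • (1 : Matrix (Fin m) (Fin m) ℂ)))
    (hBA : IsUnit (B * A - z • (1 : Matrix (Fin n) (Fin n) ℂ))) :
    ((A * B - z • 1)⁻¹.trace - (B * A - z • 1)⁻¹.trace = ((n : ℂ) - (m : ℂ)) / z) ∧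
    (1 / (m : ℂ)) * (A * B - z • 1)⁻¹.trace
      = ((n : ℂ) / (m : ℂ)) * ((1 / (n : ℂ)) * (B * A - z • 1)⁻¹.trace)
        - (1 - (n : ℂ) / (m : ℂ)) * (1 / z) := by
  simpa only [stieltjesTransform, Fintype.card_fin] using
    stmt1_general (by simpa using hm.ne') (by simpa using hn.ne') A B hz hAB hBA
end

section
/- Let A and B be n×n Hermitian positive semidefinite complex matrices, with eigenvalues λ_A(1) ≥ λ_A(2) ≥ … ≥ λ_A(n) and λ_B(1) ≥ λ_B(2) ≥ … ≥ λ_B(n) ordered decreasingly and counted with multiplicity. Then tr(A·B) is a nonnegative real number and ∑_{i=1}^n λ_A(i)·λ_B(n−i+1) ≤ tr(A·B) ≤ ∑_{i=1}^n λ_A(i)·λ_B(i). -/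
open Matrix
open scoped ComplexOrder

/-!
Diagonalise `A` and `B` by unitaries `U` and `V` and put `W = Uᴴ V`. Then `tr (A B)` is the value
`∑ i j, a i * |W i j|² * b j` of a bilinear form at the eigenvalue lists `a` and `b`, and the matrix
`|W i j|²` is doubly stochastic. A bilinear form is linear in its matrix, so by Birkhoff's theorem
it is enough to bound it at permutation matrices, where it is the sum `∑ i, a i * b (σ i)` of the
rearrangement inequality.
-/

section DoublyStochastic

variable {n R : Type*} [Fintype n] [DecidableEq n] [Field R] [LinearOrder R]
  [IsStrictOrderedRing R] {M : Matrix n n R} {a b : n → R}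

lemma dotProduct_mulVec_le_of_forall_perm (hM : M ∈ doublyStochastic R n) {c : R}
    (h : ∀ σ : Equiv.Perm n, ∑ i, a i * b (σ i) ≤ c) : a ⬝ᵥ (M *ᵥ b) ≤ c := by
  have isLinear : IsLinearMap R fun N : Matrix n n R => a ⬝ᵥ (N *ᵥ b) :=
    { map_add := fun N N' => by rw [add_mulVec, dotProduct_add]
      map_smul := fun r N => by rw [smul_mulVec, dotProduct_smul] }
  have perm_le : {σ.permMatrix R | σ : Equiv.Perm n} ⊆ {N | a ⬝ᵥ (N *ᵥ b) ≤ c} := by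
    rintro _ ⟨σ, rfl⟩
    simpa only [Set.mem_ofPred_eq, permMatrix_mulVec, dotProduct, Function.comp_apply] using h σ
  have birkhoff : M ∈ convexHull R {σ.permMatrix R | σ : Equiv.Perm n} :=
    doublyStochastic_eq_convexHull_permMatrix (R := R) (n := n) ▸ hM
  exact convexHull_min perm_le (convex_halfSpace_le isLinear c) birkhoff

lemma dotProduct_mulVec_le_of_monovary (hM : M ∈ doublyStochastic R n) (hab : Monovary a b) :
    a ⬝ᵥ (M *ᵥ b) ≤ a ⬝ᵥ b :=
  dotProduct_mulVec_le_of_forall_perm hM fun _ => hab.sum_mul_comp_perm_le_sum_mul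

lemma le_dotProduct_mulVec_of_antivary (hM : M ∈ doublyStochastic R n) (hab : Antivary a b) :
    a ⬝ᵥ b ≤ a ⬝ᵥ (M *ᵥ b) := by
  have hneg : Monovary a (-b) := fun _ _ hij => hab (neg_lt_neg_iff.mp hij)
  simpa only [mulVec_neg, dotProduct_neg, neg_le_neg_iff] using
    dotProduct_mulVec_le_of_monovary hM hneg

end DoublyStochastic

section NormSq

variable {𝕜 m n : Type*} [RCLike 𝕜]

/-- The matrix of squared absolute values of the entries of `W`. For unitary `W` this is the
unistochastic matrix of `W`; it turns the trace of a product of two Hermitian matrices into a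
bilinear form in their eigenvalues. -/
def entrywiseNormSq (W : Matrix m n 𝕜) : Matrix m n ℝ :=
  W.map fun z => ‖z‖ ^ 2

lemma entrywiseNormSq_mem_doublyStochastic [Fintype n] [DecidableEq n] {W : Matrix n n 𝕜}
    (hW : W ∈ unitaryGroup n 𝕜) : entrywiseNormSq W ∈ doublyStochastic ℝ n := by
  refine mem_doublyStochastic_iff_sum.mpr ⟨fun i j => sq_nonneg ‖W i j‖, fun i => ?_, fun j => ?_⟩
  · have row : (W * star W) i i = 1 := by rw [mem_unitaryGroup_iff.mp hW, one_apply_eq]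
    simp only [mul_apply, star_apply, RCLike.star_def, RCLike.mul_conj] at row
    exact_mod_cast row
  · have col : (star W * W) j j = 1 := by rw [mem_unitaryGroup_iff'.mp hW, one_apply_eq]
    simp only [mul_apply, star_apply, RCLike.star_def, RCLike.conj_mul] at col
    exact_mod_cast col

lemma trace_diagonal_mul_conj_diagonal [Fintype m] [DecidableEq m] [Fintype n] [DecidableEq n]
    (a : m → ℝ) (b : n → ℝ) (W : Matrix m n 𝕜) :
    (diagonal (fun i => (a i : 𝕜)) * (W * diagonal (fun j => (b j : 𝕜)) * Wᴴ)).trace =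
      ((a ⬝ᵥ (entrywiseNormSq W *ᵥ b) : ℝ) : 𝕜) := by
  have diag_conj (i : m) : (W * diagonal (fun j => (b j : 𝕜)) * Wᴴ) i i =
      (((entrywiseNormSq W *ᵥ b) i : ℝ) : 𝕜) := by
    simp only [mul_apply (N := Wᴴ), mul_diagonal, conjTranspose_apply, RCLike.star_def,
      mul_right_comm _ _ (starRingEnd 𝕜 _), RCLike.mul_conj, mulVec, dotProduct, entrywiseNormSq,
      map_apply]
    push_cast
    rfl
  simp only [trace, diag_apply, diagonal_mul, diag_conj, dotProduct]
  push_cast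
  rfl

end NormSq

section Hermitian

variable {𝕜 n : Type*} [RCLike 𝕜] [Fintype n] {A B : Matrix n n 𝕜}

lemma im_trace_mul_eq_zero (hA : A.IsHermitian) (hB : B.IsHermitian) :
    RCLike.im (A * B).trace = 0 := by
  have hstar : star (A * B).trace = (A * B).trace := by
    rw [← trace_conjTranspose, conjTranspose_mul, hA.eq, hB.eq, trace_mul_comm]
  exact RCLike.conj_eq_iff_im.mp hstar

open scoped MatrixOrder in
lemma trace_mul_nonneg (hA : A.PosSemidef) (hB : B.PosSemidef) : 0 ≤ (A * B).trace := by
  classical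
  obtain ⟨C, rfl⟩ := CStarAlgebra.nonneg_iff_eq_star_mul_self.mp hB.nonneg
  rw [star_eq_conjTranspose]
  calc (0 : 𝕜) ≤ (C * A * Cᴴ).trace := (hA.mul_mul_conjTranspose_same C).trace_nonneg
    _ = (A * (Cᴴ * C)).trace := by rw [Matrix.mul_assoc, trace_mul_comm, Matrix.mul_assoc]

variable [DecidableEq n]

lemma exists_trace_mul_eq_eigenvalues_dotProduct (hA : A.IsHermitian) (hB : B.IsHermitian) :
    ∃ M ∈ doublyStochastic ℝ n,
      (A * B).trace = ((hA.eigenvalues ⬝ᵥ (M *ᵥ hB.eigenvalues) : ℝ) : 𝕜) := by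
  set U : Matrix n n 𝕜 := hA.eigenvectorUnitary.val
  set V : Matrix n n 𝕜 := hB.eigenvectorUnitary.val
  set D : Matrix n n 𝕜 := diagonal fun i => (hA.eigenvalues i : 𝕜)
  set E : Matrix n n 𝕜 := diagonal fun i => (hB.eigenvalues i : 𝕜)
  have hW : Uᴴ * V ∈ unitaryGroup n 𝕜 := (star hA.eigenvectorUnitary * hB.eigenvectorUnitary).2
  have hAU : A = U * D * Uᴴ := hA.spectral_theorem
  have hBV : B = V * E * Vᴴ := hB.spectral_theorem
  refine ⟨entrywiseNormSq (Uᴴ * V), entrywiseNormSq_mem_doublyStochastic hW, ?_⟩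
  calc (A * B).trace
      = (U * (D * Uᴴ * V * E * Vᴴ)).trace := by rw [hAU, hBV]; simp only [Matrix.mul_assoc]
    _ = (D * Uᴴ * V * E * Vᴴ * U).trace := trace_mul_comm _ _
    _ = (D * ((Uᴴ * V) * E * (Uᴴ * V)ᴴ)).trace := by
      simp only [conjTranspose_mul, conjTranspose_conjTranspose, Matrix.mul_assoc]
    _ = _ := trace_diagonal_mul_conj_diagonal _ _ _

variable {ι : Type*} [Fintype ι]

lemma exists_re_trace_mul_eq_dotProduct [DecidableEq ι] (hA : A.IsHermitian) (hB : B.IsHermitian)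
    (e f : ι ≃ n) : ∃ M ∈ doublyStochastic ℝ ι, RCLike.re (A * B).trace =
      (hA.eigenvalues ∘ e) ⬝ᵥ (M *ᵥ (hB.eigenvalues ∘ f)) := by
  obtain ⟨M, hM, htr⟩ := exists_trace_mul_eq_eigenvalues_dotProduct hA hB
  refine ⟨M.reindex e.symm f.symm, reindex_mem_doublyStochastic hM, ?_⟩
  rw [htr, RCLike.ofReal_re, reindex_apply, submatrix_mulVec_equiv]
  simp only [Equiv.symm_symm, Function.comp_assoc, Equiv.self_comp_symm, Function.comp_id,
    comp_equiv_dotProduct_comp_equiv]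

lemma re_trace_mul_le_of_monovary (hA : A.IsHermitian) (hB : B.IsHermitian) {e f : ι ≃ n}
    (h : Monovary (hA.eigenvalues ∘ e) (hB.eigenvalues ∘ f)) :
    RCLike.re (A * B).trace ≤ ∑ i, hA.eigenvalues (e i) * hB.eigenvalues (f i) := by
  classical
  obtain ⟨M, hM, htr⟩ := exists_re_trace_mul_eq_dotProduct hA hB e f
  exact htr.trans_le (dotProduct_mulVec_le_of_monovary hM h)

lemma le_re_trace_mul_of_antivary (hA : A.IsHermitian) (hB : B.IsHermitian) {e f : ι ≃ n}
    (h : Antivary (hA.eigenvalues ∘ e) (hB.eigenvalues ∘ f)) :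
    ∑ i, hA.eigenvalues (e i) * hB.eigenvalues (f i) ≤ RCLike.re (A * B).trace := by
  classical
  obtain ⟨M, hM, htr⟩ := exists_re_trace_mul_eq_dotProduct hA hB e f
  exact (le_dotProduct_mulVec_of_antivary hM h).trans_eq htr.symm

end Hermitian

theorem stmt3_general {𝕜 : Type*} [RCLike 𝕜] {n : ℕ} {A B : Matrix (Fin n) (Fin n) 𝕜}
    (hA : A.IsHermitian) (hB : B.IsHermitian) {lA lB : Fin n → ℝ}
    (hlA : Antitone lA) (hlB : Antitone lB) {σA σB : Equiv.Perm (Fin n)}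
    (hlA' : lA = hA.eigenvalues ∘ σA) (hlB' : lB = hB.eigenvalues ∘ σB) :
    RCLike.im (A * B).trace = 0 ∧
    (∑ i, lA i * lB i.rev) ≤ RCLike.re (A * B).trace ∧
    RCLike.re (A * B).trace ≤ ∑ i, lA i * lB i := by
  subst hlA' hlB'
  exact ⟨im_trace_mul_eq_zero hA hB,
    le_re_trace_mul_of_antivary hA hB (e := σA) (f := Fin.revPerm.trans σB)
      (hlA.antivary (hlB.comp Fin.rev_anti)),
    re_trace_mul_le_of_monovary hA hB (hlA.monovary hlB)⟩

/-- Let `A, B` be `n×n` Hermitian positive semidefinite complex matrices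
with decreasingly ordered eigenvalues `lA, lB` (counted with multiplicity, i.e. given
by permutations of the spectral eigenvalue listings). Then `tr(A·B)` is a nonnegative
real number and `∑ᵢ lA(i)·lB(n−i+1) ≤ tr(A·B) ≤ ∑ᵢ lA(i)·lB(i)`. -/
theorem stmt3 (n : ℕ) (hn : 0 < n)
    (A B : Matrix (Fin n) (Fin n) ℂ)
    (hA : A.PosSemidef) (hB : B.PosSemidef)
    (lA lB : Fin n → ℝ)
    (hlA : Antitone lA) (hlB : Antitone lB)
    (σA σB : Equiv.Perm (Fin n))
    (hlA' : lA = hA.isHermitian.eigenvalues ∘ σA)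
    (hlB' : lB = hB.isHermitian.eigenvalues ∘ σB) :
    (A * B).trace.im = 0 ∧ 0 ≤ (A * B).trace.re ∧
    (∑ i, lA i * lB i.rev) ≤ (A * B).trace.re ∧
    (A * B).trace.re ≤ ∑ i, lA i * lB i := by
  obtain ⟨him, hbounds⟩ := stmt3_general hA.isHermitian hB.isHermitian hlA hlB hlA' hlB'
  exact ⟨him, (RCLike.nonneg_iff.mp (trace_mul_nonneg hA hB)).1, hbounds⟩
end

section
/- Let n be a positive integer and let d₁ ≥ d₂ ≥ … ≥ d_n > 0 and e₁ ≥ e₂ ≥ … ≥ e_n ≥ 0 be real numbers. Let Λ = diag(d₁,…,d_n) and D² = diag(e₁,…,e_n). Then for every n×n unitary complex matrix U, the trace tr(Λ⁻¹·U·D²·Uᴴ) is a real number and tr(Λ⁻¹·U·D²·Uᴴ) ≥ ∑_{i=1}^n e_i/d_i = tr(Λ⁻¹·D²); that is, among all unitary matrices U, the choice U = I minimizes tr(Λ⁻¹·U·D²·Uᴴ). -/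
/-!
Entrywise, `tr(Λ⁻¹ U D² Uᴴ) = ∑ᵢⱼ dᵢ⁻¹ |Uᵢⱼ|² eⱼ`, which is real. As `U` is unitary, `(|Uᵢⱼ|²)` is
doubly stochastic, hence by Birkhoff's theorem a convex combination of permutation matrices. At a
permutation matrix `P`, the rearrangement inequality for the oppositely ordered sequences `d⁻¹` and
`e` gives `∑ᵢⱼ dᵢ⁻¹ Pᵢⱼ eⱼ ≥ ∑ᵢ dᵢ⁻¹ eᵢ`, and averaging preserves this bound.
-/

open Matrix

theorem dotProduct_le_dotProduct_mulVec_of_mem_doublyStochastic {ι R : Type*} [Fintype ι]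
    [DecidableEq ι] [Field R] [LinearOrder R] [IsStrictOrderedRing R] {f g : ι → R}
    (hfg : Antivary f g) {M : Matrix ι ι R} (hM : M ∈ doublyStochastic R ι) :
    f ⬝ᵥ g ≤ f ⬝ᵥ M *ᵥ g := by
  obtain ⟨w, hw_nonneg, hw_sum, rfl⟩ := exists_eq_sum_perm_of_mem_doublyStochastic hM
  calc f ⬝ᵥ g
      = ∑ σ, w σ * (f ⬝ᵥ g) := by rw [← Finset.sum_mul, hw_sum, one_mul]
    _ ≤ ∑ σ : Equiv.Perm ι, w σ * (f ⬝ᵥ g ∘ σ) :=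
        Finset.sum_le_sum fun σ _ =>
          mul_le_mul_of_nonneg_left hfg.sum_mul_le_sum_mul_comp_perm (hw_nonneg σ)
    _ = f ⬝ᵥ (∑ σ, w σ • σ.permMatrix R) *ᵥ g := by
        simp only [sum_mulVec, smul_mulVec, permMatrix_mulVec, dotProduct_sum, dotProduct_smul,
          smul_eq_mul]

theorem inv_diagonal_of_forall_ne_zero {ι K : Type*} [Fintype ι] [DecidableEq ι] [Field K]
    {v : ι → K} (hv : ∀ i, v i ≠ 0) : (diagonal v)⁻¹ = diagonal v⁻¹ := by
  refine inv_eq_right_inv ?_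
  simp only [diagonal_mul_diagonal, Pi.inv_apply, mul_inv_cancel₀ (hv _), diagonal_one]

section RCLike

variable {m n 𝕜 : Type*} [Fintype n] [RCLike 𝕜]

theorem mul_diagonal_mul_conjTranspose_apply_self [DecidableEq n] (A : Matrix m n 𝕜)
    (g : n → ℝ) (i : m) :
    (A * diagonal (fun j => (g j : 𝕜)) * Aᴴ) i i = ((A.map (‖·‖ ^ 2) *ᵥ g) i : ℝ) := by
  rw [mul_apply, mulVec, dotProduct, RCLike.ofReal_sum]
  refine Finset.sum_congr rfl fun j _ => ?_
  rw [mul_diagonal, conjTranspose_apply, RCLike.star_def, mul_right_comm, RCLike.mul_conj,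
    map_apply, RCLike.ofReal_mul, RCLike.ofReal_pow]

theorem trace_diagonal_mul_mul_diagonal_mul_conjTranspose [DecidableEq n] [Fintype m]
    [DecidableEq m] (f : m → ℝ) (A : Matrix m n 𝕜) (g : n → ℝ) :
    (diagonal (fun i => (f i : 𝕜)) * A * diagonal (fun j => (g j : 𝕜)) * Aᴴ).trace =
      (f ⬝ᵥ A.map (‖·‖ ^ 2) *ᵥ g : ℝ) := by
  simp only [Matrix.mul_assoc, trace, diag_apply, diagonal_mul]
  simp only [← Matrix.mul_assoc, mul_diagonal_mul_conjTranspose_apply_self, dotProduct,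
    RCLike.ofReal_sum, RCLike.ofReal_mul]

theorem map_norm_sq_mulVec_one_of_mul_conjTranspose_eq_one [DecidableEq m] {A : Matrix m n 𝕜}
    (hA : A * Aᴴ = 1) : A.map (‖·‖ ^ 2) *ᵥ 1 = 1 := by
  classical
  funext i
  have hdiag := mul_diagonal_mul_conjTranspose_apply_self A 1 i
  simp only [Pi.one_apply, RCLike.ofReal_one, diagonal_one, Matrix.mul_one, hA,
    one_apply_eq] at hdiag
  exact_mod_cast hdiag.symm

theorem map_norm_sq_mem_doublyStochastic [DecidableEq n] {U : Matrix n n 𝕜}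
    (hU : U ∈ unitaryGroup n 𝕜) :
    U.map (‖·‖ ^ 2) ∈ doublyStochastic ℝ n := by
  have hrow := map_norm_sq_mulVec_one_of_mul_conjTranspose_eq_one (mem_unitaryGroup_iff.1 hU)
  have hcol : Uᴴ.map (‖·‖ ^ 2) *ᵥ 1 = 1 :=
    map_norm_sq_mulVec_one_of_mul_conjTranspose_eq_one <| by
      rw [conjTranspose_conjTranspose]; exact mem_unitaryGroup_iff'.1 hU
  have htranspose : Uᴴ.map (‖·‖ ^ 2) = (U.map (‖·‖ ^ 2))ᵀ := by
    ext i j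
    simp only [map_apply, conjTranspose_apply, transpose_apply, norm_star]
  rw [htranspose, mulVec_transpose] at hcol
  exact mem_doublyStochastic.2 ⟨fun _ _ => sq_nonneg _, hrow, hcol⟩

theorem stmt7_general [DecidableEq n] {d e : n → ℝ} (hd : ∀ i, d i ≠ 0)
    (hde : Antivary d⁻¹ e) {U : Matrix n n 𝕜} (hU : U ∈ unitaryGroup n 𝕜) :
    RCLike.im
      ((diagonal fun i => (d i : 𝕜))⁻¹ * U * diagonal (fun i => (e i : 𝕜)) * Uᴴ).trace = 0 ∧
    ∑ i, e i / d i ≤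
      RCLike.re ((diagonal fun i => (d i : 𝕜))⁻¹ * U * diagonal (fun i => (e i : 𝕜)) * Uᴴ).trace ∧
    ((diagonal fun i => (d i : 𝕜))⁻¹ * diagonal (fun i => (e i : 𝕜))).trace =
      ((∑ i, e i / d i : ℝ) : 𝕜) := by
  have hinv : (diagonal fun i => (d i : 𝕜))⁻¹ = diagonal fun i => ((d⁻¹ i : ℝ) : 𝕜) := by
    rw [inv_diagonal_of_forall_ne_zero fun i => RCLike.ofReal_ne_zero.2 (hd i)]
    simp only [Pi.inv_def, RCLike.ofReal_inv]
  have hsum : ∑ i, e i / d i = d⁻¹ ⬝ᵥ e := by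
    simp only [div_eq_inv_mul, dotProduct, Pi.inv_apply]
  rw [hinv, hsum, trace_diagonal_mul_mul_diagonal_mul_conjTranspose]
  refine ⟨RCLike.ofReal_im _, ?_, ?_⟩
  · rw [RCLike.ofReal_re]
    exact dotProduct_le_dotProduct_mulVec_of_mem_doublyStochastic hde
      (map_norm_sq_mem_doublyStochastic hU)
  · simp only [diagonal_mul_diagonal, trace_diagonal, dotProduct, RCLike.ofReal_sum,
      RCLike.ofReal_mul]

end RCLike

/-- Let `d₁ ≥ … ≥ d_n > 0` and `e₁ ≥ … ≥ e_n ≥ 0`, `Λ = diag(d)`,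
`D² = diag(e)`. For every `n×n` unitary `U`, `tr(Λ⁻¹·U·D²·Uᴴ)` is a real number and
`tr(Λ⁻¹·U·D²·Uᴴ) ≥ ∑ᵢ eᵢ/dᵢ = tr(Λ⁻¹·D²)`; i.e. `U = I` minimizes the trace. -/
theorem stmt7 (n : ℕ) (hn : 0 < n)
    (d e : Fin n → ℝ)
    (hd : Antitone d) (hdpos : ∀ i, 0 < d i)
    (he : Antitone e) (henn : ∀ i, 0 ≤ e i)
    (U : Matrix (Fin n) (Fin n) ℂ)
    (hU : U * Uᴴ = 1 ∧ Uᴴ * U = 1) :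
    (((Matrix.diagonal fun i => (d i : ℂ))⁻¹ * U * Matrix.diagonal (fun i => (e i : ℂ)) * Uᴴ).trace).im = 0 ∧
    (∑ i, e i / d i)
      ≤ (((Matrix.diagonal fun i => (d i : ℂ))⁻¹ * U * Matrix.diagonal (fun i => (e i : ℂ)) * Uᴴ).trace).re ∧
    ((Matrix.diagonal fun i => (d i : ℂ))⁻¹ * Matrix.diagonal (fun i => (e i : ℂ))).trace
      = ((∑ i, e i / d i : ℝ) : ℂ) := by
  have hde : Antivary d⁻¹ e := (antivary_inv_left₀ (f := d) hdpos).2 (hd.monovary he)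
  exact stmt7_general (fun i => (hdpos i).ne') hde (mem_unitaryGroup_iff.2 hU.1)
end

section
/- Let 0 ≤ r < 1 and t ≥ 0 be real numbers, and set c = (1−r)/(1+r). Then (1/(2π)) · ∫₀^{2π} (1 − r²) / ((1 − 2r·cos ν + r²) + t·(1 − r²)) dν = 1/√((c + t)·(1/c + t)). -/
/-!
In terms of `c`, the reciprocal of the integrand is `A - B cos ν` with `A + B = 1 / c + t` and
`A - B = c + t`. For `|B| < A`, the function `√(A² - B²) / (A - B cos ν)` is the Poisson kernel of
the disk of radius `√(A + B) + √(A - B)` with pole at the real point `√(A + B) - √(A - B)`, so its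
mean over a period is `1`.
-/

open Complex InnerProductSpace Metric Real

lemma poissonKernel_circleMap_ofReal (R ρ ν : ℝ) :
    poissonKernel 0 ρ (circleMap 0 R ν)
      = (R ^ 2 - ρ ^ 2) / (R ^ 2 - 2 * R * ρ * Real.cos ν + ρ ^ 2) := by
  have hre : (circleMap 0 R ν * starRingEnd ℂ ρ).re = R * ρ * Real.cos ν := by
    simp [circleMap_zero, exp_ofReal_mul_I_re, mul_right_comm]
  have hnorm : ‖circleMap 0 R ν - ρ‖ ^ 2 = R ^ 2 - 2 * R * ρ * Real.cos ν + ρ ^ 2 := by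
    rw [← normSq_eq_norm_sq, normSq_sub, hre, normSq_eq_norm_sq, normSq_eq_norm_sq,
      norm_circleMap_zero, norm_real, norm_eq_abs, sq_abs, sq_abs]
    ring
  rw [poissonKernel_def, sub_zero, sub_zero, hnorm, norm_circleMap_zero, norm_real, norm_eq_abs,
    sq_abs, sq_abs]

lemma poissonKernel_circleMap_add_sub (p q ν : ℝ) :
    poissonKernel 0 (p - q : ℝ) (circleMap 0 (p + q) ν)
      = 2 * (p * q) / (p ^ 2 + q ^ 2 - (p ^ 2 - q ^ 2) * Real.cos ν) := by
  have hnum : (p + q) ^ 2 - (p - q) ^ 2 = 2 * (2 * (p * q)) := by ring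
  have hden : (p + q) ^ 2 - 2 * (p + q) * (p - q) * Real.cos ν + (p - q) ^ 2
      = 2 * (p ^ 2 + q ^ 2 - (p ^ 2 - q ^ 2) * Real.cos ν) := by ring
  rw [poissonKernel_circleMap_ofReal, hnum, hden, mul_div_mul_left _ _ two_ne_zero]

lemma circleAverage_poissonKernel {c w : ℂ} {R : ℝ} (hw : w ∈ ball c R) :
    circleAverage (poissonKernel c w) c R = 1 := by
  have hmean := HarmonicOnNhd.circleAverage_poissonKernel_smul (f := 1) (harmonicOnNhd_const 1) hw
  rwa [smul_eq_mul, mul_one] at hmean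

lemma integral_inv_sub_mul_cos {A B : ℝ} (hAB : |B| < A) :
    ∫ ν in 0..2 * π, (A - B * Real.cos ν)⁻¹ = 2 * π / √(A ^ 2 - B ^ 2) := by
  obtain ⟨hneg, hpos⟩ := abs_lt.1 hAB
  have hsub : 0 < A - B := by linarith
  have hadd : 0 < A + B := by linarith
  have hprod : √(A ^ 2 - B ^ 2) = √(A + B) * √(A - B) := by
    rw [sq_sub_sq, Real.sqrt_mul hadd.le]
  set p := √(A + B)
  set q := √(A - B)
  have hp : 0 < p := Real.sqrt_pos.2 hadd
  have hq : 0 < q := Real.sqrt_pos.2 hsub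
  have hkernel (ν : ℝ) : poissonKernel 0 (p - q : ℝ) (circleMap 0 (p + q) ν)
      = p * q * (A - B * Real.cos ν)⁻¹ := by
    have hden : p ^ 2 + q ^ 2 - (p ^ 2 - q ^ 2) * Real.cos ν = 2 * (A - B * Real.cos ν) := by
      rw [Real.sq_sqrt hadd.le, Real.sq_sqrt hsub.le]
      ring
    rw [poissonKernel_circleMap_add_sub, hden, mul_div_mul_left _ _ two_ne_zero, div_eq_mul_inv]
  have hpole : ((p - q : ℝ) : ℂ) ∈ ball 0 (p + q) := by
    rw [mem_ball_zero_iff, norm_real, norm_eq_abs, abs_lt]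
    constructor <;> linarith
  have hmean : (2 * π)⁻¹ * (p * q * ∫ ν in 0..2 * π, (A - B * Real.cos ν)⁻¹) = 1 := by
    simpa only [circleAverage_def, hkernel, intervalIntegral.integral_const_mul, smul_eq_mul]
      using circleAverage_poissonKernel hpole
  rw [hprod]
  field_simp at hmean ⊢
  linarith

theorem stmt12_general (r t : ℝ) (hr : r ≠ 1) (hr' : r ≠ -1) (c : ℝ)
    (hc : c = (1 - r) / (1 + r)) (hct : 0 < c + t) (hct' : 0 < 1 / c + t) :
    (1 / (2 * Real.pi)) *
        ∫ ν in (0 : ℝ)..(2 * Real.pi),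
          (1 - r ^ 2) / ((1 - 2 * r * Real.cos ν + r ^ 2) + t * (1 - r ^ 2))
      = 1 / Real.sqrt ((c + t) * (1 / c + t)) := by
  have hsub : 1 - r ≠ 0 := sub_ne_zero.2 hr.symm
  have hadd : 1 + r ≠ 0 := fun h ↦ hr' (by linarith)
  have hsq : 1 - r ^ 2 ≠ 0 := by
    rw [show 1 - r ^ 2 = (1 - r) * (1 + r) by ring]
    exact mul_ne_zero hsub hadd
  set A := (1 / c + c) / 2 + t with hA
  set B := (1 / c - c) / 2 with hB
  have hAB : |B| < A := abs_lt.2 ⟨by linarith, by linarith⟩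
  have hprod : A ^ 2 - B ^ 2 = (c + t) * (1 / c + t) := by rw [hA, hB]; ring
  have hintegrand (ν : ℝ) :
      (1 - r ^ 2) / ((1 - 2 * r * Real.cos ν + r ^ 2) + t * (1 - r ^ 2))
        = (A - B * Real.cos ν)⁻¹ := by
    have hden : (1 - 2 * r * Real.cos ν + r ^ 2) + t * (1 - r ^ 2)
        = (1 - r ^ 2) * (A - B * Real.cos ν) := by
      rw [hA, hB, hc]
      field_simp
      ring
    rw [hden, div_mul_cancel_left₀ hsq]
  simp_rw [hintegrand]
  rw [integral_inv_sub_mul_cos hAB, hprod]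
  field_simp

/-- For `0 ≤ r < 1`, `t ≥ 0` and `c = (1−r)/(1+r)`,
`(1/(2π)) ∫₀^{2π} (1 − r²)/((1 − 2r cos ν + r²) + t(1 − r²)) dν
   = 1/√((c + t)(1/c + t))`. -/
theorem stmt12 (r t : ℝ) (hr0 : 0 ≤ r) (hr1 : r < 1) (ht : 0 ≤ t)
    (c : ℝ) (hc : c = (1 - r) / (1 + r)) :
    (1 / (2 * Real.pi)) *
        ∫ ν in (0 : ℝ)..(2 * Real.pi),
          (1 - r ^ 2) / ((1 - 2 * r * Real.cos ν + r ^ 2) + t * (1 - r ^ 2))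
      = 1 / Real.sqrt ((c + t) * (1 / c + t)) := by
  have hc0 : 0 < c := hc ▸ div_pos (by linarith) (by linarith)
  exact stmt12_general r t hr1.ne (by linarith) c hc (by positivity) (by positivity)
end

section
/- Let 0 ≤ r₁ < 1, 0 ≤ r₂ < 1 and t ≥ 0 be real numbers. Set c₁ = (1−r₁)/(1+r₁), c₂ = (1−r₂)/(1+r₂), and m = 1 − ((c₂/c₁ + t)·(c₁/c₂ + t)) / ((1/(c₁c₂) + t)·(c₁c₂ + t)); then 0 ≤ m < 1, and (1/(2π)²) · ∫₀^{2π} ∫₀^{2π} (1−r₁²)·(1−r₂²) / ((1 − 2r₁·cos λ + r₁²)·(1 − 2r₂·cos ν + r₂²) + t·(1−r₁²)·(1−r₂²)) dλ dν = (2/π) · (1/√((c₁c₂ + t)·(1/(c₁c₂) + t))) · K(m), where K(m) = ∫₀^{π/2} dθ/√(1 − m·sin²θ) is the complete elliptic integral of the first kind. -/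
/-!
With `c = (1 - r) / (1 + r)` one has
`1 - 2 r cos l + r² = (1 - r²) (c cos² (l/2) + c⁻¹ sin² (l/2))`. After division by
`(1 - r₁²) (1 - r₂²)` the integrand is therefore `1 / Q`, where `Q` is a diagonal quadratic form in
`(cos (ν/2), sin (ν/2))` whose coefficients are such forms in `(cos (l/2), sin (l/2))`.

Both integrations use one substitution. If `φ` is the polar angle of the point `(cos θ, k sin θ)`,
so that `tan φ = k tan θ`, then every `p cos² φ + q sin² φ` is a quotient of two diagonal forms in
`θ`, whose denominator `D` depends only on `k`, and `dφ / dθ = k / D`. A suitable `k` makes one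
factor of `(p cos² φ + q sin² φ) (r cos² φ + s sin² φ)` a constant multiple of `1 / D`, which brings
the integral of the inverse square root of this product into Legendre's form. When the two factors
coincide, the parameter `m` is `0` and this is the inner integral; its value is again the inverse
square root of a product of two diagonal forms, now in `l/2`.
-/

open Real

/-- The diagonal quadratic form with coefficients `p`, `q`, evaluated at `(cos θ, sin θ)`. The
denominators of all integrands below are built from such forms. -/
noncomputable def quadForm (p q θ : ℝ) : ℝ := p * cos θ ^ 2 + q * sin θ ^ 2

section quadForm

variable (p q r s t θ φ : ℝ)

lemma quadForm_self : quadForm p p θ = p := by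
  rw [quadForm, ← mul_add, cos_sq_add_sin_sq, mul_one]

lemma quadForm_pi_sub : quadForm p q (π - θ) = quadForm p q θ := by
  simp [quadForm]

@[fun_prop]
lemma continuous_quadForm : Continuous (quadForm p q) := by
  unfold quadForm
  fun_prop

lemma quadForm_eq_mul_one_sub (hp : p ≠ 0) :
    quadForm p q θ = p * (1 - (1 - q / p) * sin θ ^ 2) := by
  rw [quadForm, cos_sq']
  field_simp
  ring

lemma quadForm_mul_quadForm_add :
    quadForm p q θ * quadForm r s φ + t =
      quadForm (quadForm (p * r + t) (q * r + t) θ) (quadForm (p * s + t) (q * s + t) θ) φ := by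
  simp only [quadForm, cos_sq']
  ring

variable {p q}

lemma quadForm_pos (hp : 0 < p) (hq : 0 < q) : 0 < quadForm p q θ := by
  have hpq : quadForm p q θ = min p q + (p - min p q) * cos θ ^ 2 + (q - min p q) * sin θ ^ 2 := by
    rw [quadForm]
    linear_combination min p q * sin_sq_add_cos_sq θ
  have hp' : 0 ≤ p - min p q := sub_nonneg.2 (min_le_left p q)
  have hq' : 0 ≤ q - min p q := sub_nonneg.2 (min_le_right p q)
  have : 0 < min p q := lt_min hp hq
  rw [hpq]
  positivity

end quadForm

/-- The polar angle of the point `(cos θ, k sin θ)` of an ellipse with semi-axes `1` and `k`, which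
serves as a substitution in integrals over `[0, π/2]`. For `k > 0` it is `arctan (k * tan θ)` on
`(-π/2, π/2)`, but unlike this formula it is smooth at `±π/2`. -/
noncomputable def ellipseAngle (k θ : ℝ) : ℝ := Complex.arg ⟨cos θ, k * sin θ⟩

section ellipseAngle

variable {k : ℝ}

lemma ellipseAngle_zero (k : ℝ) : ellipseAngle k 0 = 0 := by
  rw [ellipseAngle, sin_zero, mul_zero, cos_zero]
  exact Complex.arg_one

lemma ellipseAngle_pi_div_two (hk : 0 < k) : ellipseAngle k (π / 2) = π / 2 := by
  rw [ellipseAngle, Complex.arg_eq_pi_div_two_iff]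
  simpa using hk

lemma quadForm_ellipseAngle (hk : k ≠ 0) (p q θ : ℝ) :
    quadForm p q (ellipseAngle k θ) = quadForm p (q * k ^ 2) θ / quadForm 1 (k ^ 2) θ := by
  have hD : 0 < quadForm 1 (k ^ 2) θ := quadForm_pos θ one_pos (by positivity)
  have hnorm : ‖(⟨cos θ, k * sin θ⟩ : ℂ)‖ ^ 2 = quadForm 1 (k ^ 2) θ := by
    rw [Complex.sq_norm, Complex.normSq_mk, quadForm]
    ring
  have hz : (⟨cos θ, k * sin θ⟩ : ℂ) ≠ 0 := by
    rw [← norm_ne_zero_iff, ← sq_pos_iff, hnorm]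
    exact hD
  rw [ellipseAngle, quadForm, Complex.cos_arg hz, Complex.sin_arg, div_pow, div_pow, hnorm,
    quadForm.eq_def p (q * k ^ 2)]
  ring

lemma hasDerivAt_ellipseAngle (hk : k ≠ 0) {θ : ℝ} (hθ : θ ∈ Set.Ioo (-π) π) :
    HasDerivAt (ellipseAngle k) (k / quadForm 1 (k ^ 2) θ) θ := by
  have hslit : (⟨cos θ, k * sin θ⟩ : ℂ) ∈ Complex.slitPlane := by
    rw [Complex.mem_slitPlane_iff]
    by_cases hsin : sin θ = 0
    · rw [sin_eq_zero_iff_of_lt_of_lt hθ.1 hθ.2] at hsin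
      simp [hsin]
    · exact .inr (mul_ne_zero hk hsin)
  have hpoint : HasDerivAt (fun x : ℝ ↦ (⟨cos x, k * sin x⟩ : ℂ)) ⟨-sin θ, k * cos θ⟩ θ := by
    simp only [Complex.mk_eq_add_mul_I]
    exact (hasDerivAt_cos θ).ofReal_comp.add
      (((hasDerivAt_sin θ).const_mul k).ofReal_comp.mul_const Complex.I)
  have him_log : ellipseAngle k = Complex.imCLM ∘ fun x ↦ Complex.log ⟨cos x, k * sin x⟩ :=
    funext fun x ↦ (Complex.log_im _).symm
  rw [him_log]
  refine (Complex.imCLM.hasFDerivAt.comp_hasDerivAt θ (hpoint.clog_real hslit)).congr_deriv ?_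
  simp only [Complex.imCLM_apply, Complex.div_im, Complex.normSq_mk]
  rw [← sub_div]
  congr 1
  · linear_combination k * sin_sq_add_cos_sq θ
  · rw [quadForm]
    ring

lemma integral_comp_ellipseAngle_mul_deriv (hk : 0 < k) {g : ℝ → ℝ} (hg : Continuous g) :
    ∫ θ in 0..π / 2, g (ellipseAngle k θ) * (k / quadForm 1 (k ^ 2) θ) =
      ∫ φ in 0..π / 2, g φ := by
  have hderiv : ∀ θ ∈ Set.uIcc 0 (π / 2),
      HasDerivAt (ellipseAngle k) (k / quadForm 1 (k ^ 2) θ) θ := by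
    intro θ hθ
    rw [Set.uIcc_of_le (by positivity)] at hθ
    exact hasDerivAt_ellipseAngle hk.ne' ⟨by linarith [hθ.1, pi_pos], by linarith [hθ.2, pi_pos]⟩
  have hcont : Continuous fun θ ↦ k / quadForm 1 (k ^ 2) θ :=
    continuous_const.div (by fun_prop) fun θ ↦ (quadForm_pos θ one_pos (by positivity)).ne'
  have h := intervalIntegral.integral_comp_mul_deriv hderiv hcont.continuousOn hg
  rwa [ellipseAngle_zero, ellipseAngle_pi_div_two hk] at h

end ellipseAngle

/-- The complete elliptic integral of the first kind `K(m)`, as a function of the parameter `m`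
(the square of the modulus). -/
noncomputable def completeEllipticK (m : ℝ) : ℝ :=
  ∫ θ in 0..π / 2, 1 / √(1 - m * sin θ ^ 2)

lemma completeEllipticK_zero : completeEllipticK 0 = π / 2 := by
  simp [completeEllipticK]

section integrals

variable {p q r s : ℝ}

lemma integral_inv_sqrt_quadForm (hp : 0 < p) (q : ℝ) :
    ∫ θ in 0..π / 2, 1 / √(quadForm p q θ) = 1 / √p * completeEllipticK (1 - q / p) := by
  rw [completeEllipticK, ← intervalIntegral.integral_const_mul]
  refine intervalIntegral.integral_congr fun θ _ ↦ ?_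
  rw [quadForm_eq_mul_one_sub p q θ hp.ne', sqrt_mul hp.le, one_div_mul_one_div]

lemma continuous_inv_sqrt_quadForm_mul_quadForm (hp : 0 < p) (hq : 0 < q) (hr : 0 < r)
    (hs : 0 < s) : Continuous fun φ ↦ 1 / √(quadForm p q φ * quadForm r s φ) :=
  continuous_const.div (by fun_prop) fun φ ↦
    (sqrt_pos.2 (mul_pos (quadForm_pos φ hp hq) (quadForm_pos φ hr hs))).ne'

lemma integral_inv_sqrt_quadForm_mul_quadForm (hp : 0 < p) (hq : 0 < q) (hr : 0 < r)
    (hs : 0 < s) :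
    ∫ φ in 0..π / 2, 1 / √(quadForm p q φ * quadForm r s φ) =
      1 / √(p * s) * completeEllipticK (1 - q * r / (p * s)) := by
  -- this `k` turns `quadForm r s` into the constant `r` over the common denominator
  set k := √(r / s)
  have hk : 0 < k := sqrt_pos.2 (div_pos hr hs)
  have hk_sq : k ^ 2 = r / s := sq_sqrt (div_pos hr hs).le
  rw [← integral_inv_sqrt_quadForm (mul_pos hp hs), ← integral_comp_ellipseAngle_mul_deriv hk
    (continuous_inv_sqrt_quadForm_mul_quadForm hp hq hr hs)]
  refine intervalIntegral.integral_congr fun θ _ ↦ ?_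
  have hD : 0 < quadForm 1 (k ^ 2) θ := quadForm_pos θ one_pos (by positivity)
  have hT : 0 < quadForm (p * s) (q * r) θ := quadForm_pos θ (mul_pos hp hs) (mul_pos hq hr)
  have hprod : quadForm p q (ellipseAngle k θ) * quadForm r s (ellipseAngle k θ) =
      (k / quadForm 1 (k ^ 2) θ) ^ 2 * quadForm (p * s) (q * r) θ := by
    have hconst : quadForm r (s * k ^ 2) θ = r := by
      rw [hk_sq, mul_div_cancel₀ r hs.ne', quadForm_self]
    rw [quadForm_ellipseAngle hk.ne', quadForm_ellipseAngle hk.ne', hconst, div_pow, hk_sq]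
    field_simp
    simp only [quadForm]
    field_simp
  rw [hprod, sqrt_mul (by positivity), sqrt_sq (by positivity)]
  field_simp

lemma integral_inv_quadForm (hp : 0 < p) (hq : 0 < q) :
    ∫ φ in 0..π / 2, 1 / quadForm p q φ = π / 2 / √(p * q) := by
  have h := integral_inv_sqrt_quadForm_mul_quadForm hp hq hp hq
  simp only [sqrt_mul_self (quadForm_pos _ hp hq).le] at h
  rw [h, mul_comm q p, div_self (mul_pos hp hq).ne', sub_self, completeEllipticK_zero]
  ring

lemma integral_comp_div_two_of_symm {E : Type*} [NormedAddCommGroup E] [NormedSpace ℝ E]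
    {f : ℝ → E} {a : ℝ} (hf : Continuous f) (hsymm : ∀ x, f (a - x) = f x) :
    ∫ x in 0..2 * a, f (x / 2) = (4 : ℝ) • ∫ x in 0..a / 2, f x := by
  have hreflect : ∫ x in a / 2..a, f x = ∫ x in 0..a / 2, f x := by
    have h := intervalIntegral.integral_comp_sub_left (a := 0) (b := a / 2) f a
    rw [sub_half, sub_zero] at h
    simp only [← h, hsymm]
  rw [intervalIntegral.integral_comp_div _ two_ne_zero, zero_div,
    mul_div_cancel_left₀ _ two_ne_zero, ← intervalIntegral.integral_add_adjacent_intervals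
      (hf.intervalIntegrable 0 (a / 2)) (hf.intervalIntegrable (a / 2) a), hreflect]
  module

lemma integral_inv_quadForm_div_two (hp : 0 < p) (hq : 0 < q) :
    ∫ ν in 0..2 * π, 1 / quadForm p q (ν / 2) = 2 * π * (1 / √(p * q)) := by
  have hcont : Continuous fun φ ↦ 1 / quadForm p q φ :=
    continuous_const.div (by fun_prop) fun φ ↦ (quadForm_pos φ hp hq).ne'
  rw [integral_comp_div_two_of_symm hcont fun φ ↦ by rw [quadForm_pi_sub],
    integral_inv_quadForm hp hq, smul_eq_mul]
  ring

lemma integral_integral_inv_quadForm_div_two (hp : 0 < p) (hq : 0 < q) (hr : 0 < r) (hs : 0 < s) :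
    ∫ l in 0..2 * π, ∫ ν in 0..2 * π,
        1 / quadForm (quadForm p q (l / 2)) (quadForm r s (l / 2)) (ν / 2) =
      8 * π * (1 / √(p * s)) * completeEllipticK (1 - q * r / (p * s)) := by
  simp only [integral_inv_quadForm_div_two (quadForm_pos _ hp hq) (quadForm_pos _ hr hs)]
  rw [intervalIntegral.integral_const_mul, integral_comp_div_two_of_symm
      (continuous_inv_sqrt_quadForm_mul_quadForm hp hq hr hs)
      fun φ ↦ by rw [quadForm_pi_sub, quadForm_pi_sub],
    integral_inv_sqrt_quadForm_mul_quadForm hp hq hr hs, smul_eq_mul]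
  ring

end integrals

/-- The coefficient `c = (1 - r) / (1 + r)` of `cos² (l/2)` in the half-angle form of the normalized
denominator `(1 - 2 r cos l + r²) / (1 - r²)` of the Poisson kernel. -/
noncomputable def halfAngleCoeff (r : ℝ) : ℝ := (1 - r) / (1 + r)

section halfAngleCoeff

lemma halfAngleCoeff_neg (r : ℝ) : halfAngleCoeff (-r) = (halfAngleCoeff r)⁻¹ := by
  rw [halfAngleCoeff, halfAngleCoeff, inv_div, sub_neg_eq_add, ← sub_eq_add_neg]

lemma halfAngleCoeff_pos {r : ℝ} (hr : |r| < 1) : 0 < halfAngleCoeff r :=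
  div_pos (by linarith [(abs_lt.1 hr).2]) (by linarith [(abs_lt.1 hr).1])

lemma halfAngleCoeff_abs_le {r : ℝ} (hr : |r| < 1) : halfAngleCoeff |r| ≤ halfAngleCoeff r := by
  have := (abs_lt.1 hr).1
  have := le_abs_self r
  unfold halfAngleCoeff
  gcongr <;> linarith

lemma one_sub_ne_zero_and_one_add_ne_zero {r : ℝ} (hr : r ^ 2 ≠ 1) : 1 - r ≠ 0 ∧ 1 + r ≠ 0 := by
  rw [← mul_ne_zero_iff, mul_comm, ← sq_sub_sq, one_pow]
  exact sub_ne_zero.2 hr.symm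

lemma halfAngleCoeff_ne_zero {r : ℝ} (hr : r ^ 2 ≠ 1) : halfAngleCoeff r ≠ 0 :=
  have ⟨hsub, hadd⟩ := one_sub_ne_zero_and_one_add_ne_zero hr
  div_ne_zero hsub hadd

lemma halfAngleCoeff_inv_sub {r : ℝ} (hr : r ^ 2 ≠ 1) :
    (halfAngleCoeff r)⁻¹ - halfAngleCoeff r = 4 * r / (1 - r ^ 2) := by
  obtain ⟨hsub, hadd⟩ := one_sub_ne_zero_and_one_add_ne_zero hr
  rw [halfAngleCoeff, inv_div, show 1 - r ^ 2 = (1 - r) * (1 + r) by ring]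
  field_simp
  ring

lemma one_sub_two_mul_cos_add_sq {r : ℝ} (hr : r ^ 2 ≠ 1) (l : ℝ) :
    1 - 2 * r * cos l + r ^ 2 =
      (1 - r ^ 2) * quadForm (halfAngleCoeff r) (halfAngleCoeff r)⁻¹ (l / 2) := by
  obtain ⟨hsub, hadd⟩ := one_sub_ne_zero_and_one_add_ne_zero hr
  have hcos : cos l = 2 * cos (l / 2) ^ 2 - 1 := by
    rw [← cos_two_mul, mul_div_cancel₀ l two_ne_zero]
  rw [hcos, quadForm, halfAngleCoeff, sin_sq]
  field_simp
  ring

variable {r₁ r₂ t : ℝ}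

lemma halfAngleCoeff_mul_add_pos (hr₁ : |r₁| < 1) (hr₂ : |r₂| < 1)
    (ht : 0 < (1 - |r₁|) * (1 - |r₂|) + t * ((1 + |r₁|) * (1 + |r₂|))) :
    0 < halfAngleCoeff r₁ * halfAngleCoeff r₂ + t := by
  have hcommon : halfAngleCoeff |r₁| * halfAngleCoeff |r₂| + t =
      ((1 - |r₁|) * (1 - |r₂|) + t * ((1 + |r₁|) * (1 + |r₂|))) / ((1 + |r₁|) * (1 + |r₂|)) := by
    unfold halfAngleCoeff
    field_simp
  calc
    0 < halfAngleCoeff |r₁| * halfAngleCoeff |r₂| + t := by rw [hcommon]; positivity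
    _ ≤ halfAngleCoeff r₁ * halfAngleCoeff r₂ + t := by
      gcongr
      · exact (halfAngleCoeff_pos ((abs_abs r₂).trans_lt hr₂)).le
      · exact (halfAngleCoeff_pos hr₁).le
      · exact halfAngleCoeff_abs_le hr₁
      · exact halfAngleCoeff_abs_le hr₂

lemma halfAngleCoeff_mul_sub_mul (hr₁ : r₁ ^ 2 ≠ 1) (hr₂ : r₂ ^ 2 ≠ 1) (t : ℝ) :
    (halfAngleCoeff r₁ * halfAngleCoeff r₂ + t) *
        (1 / (halfAngleCoeff r₁ * halfAngleCoeff r₂) + t) -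
      (halfAngleCoeff r₂ / halfAngleCoeff r₁ + t) * (halfAngleCoeff r₁ / halfAngleCoeff r₂ + t) =
    16 / ((1 - r₁ ^ 2) * (1 - r₂ ^ 2)) * (t * (r₁ * r₂)) := by
  have hc₁ := halfAngleCoeff_ne_zero hr₁
  have hc₂ := halfAngleCoeff_ne_zero hr₂
  calc
    _ = t * (((halfAngleCoeff r₁)⁻¹ - halfAngleCoeff r₁) *
        ((halfAngleCoeff r₂)⁻¹ - halfAngleCoeff r₂)) := by field_simp; ring
    _ = _ := by rw [halfAngleCoeff_inv_sub hr₁, halfAngleCoeff_inv_sub hr₂, div_mul_div_comm]; ring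

lemma div_poisson_denom_mul_add (hr₁ : r₁ ^ 2 ≠ 1) (hr₂ : r₂ ^ 2 ≠ 1) (t l ν : ℝ) :
    (1 - r₁ ^ 2) * (1 - r₂ ^ 2) /
        ((1 - 2 * r₁ * cos l + r₁ ^ 2) * (1 - 2 * r₂ * cos ν + r₂ ^ 2)
          + t * (1 - r₁ ^ 2) * (1 - r₂ ^ 2)) =
      1 / quadForm
        (quadForm (halfAngleCoeff r₁ * halfAngleCoeff r₂ + t)
          (halfAngleCoeff r₂ / halfAngleCoeff r₁ + t) (l / 2))
        (quadForm (halfAngleCoeff r₁ / halfAngleCoeff r₂ + t)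
          (1 / (halfAngleCoeff r₁ * halfAngleCoeff r₂) + t) (l / 2)) (ν / 2) := by
  have hR : (1 - r₁ ^ 2) * (1 - r₂ ^ 2) ≠ 0 :=
    mul_ne_zero (sub_ne_zero.2 hr₁.symm) (sub_ne_zero.2 hr₂.symm)
  rw [div_eq_inv_mul (halfAngleCoeff r₂), div_eq_mul_inv (halfAngleCoeff r₁), one_div (_ * _),
    mul_inv, ← quadForm_mul_quadForm_add, one_sub_two_mul_cos_add_sq hr₁,
    one_sub_two_mul_cos_add_sq hr₂, mul_mul_mul_comm, mul_assoc t, mul_comm t, ← mul_add,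
    div_mul_cancel_left₀ hR, one_div]

end halfAngleCoeff

theorem stmt16_general (r₁ r₂ t : ℝ) (hr₁ : |r₁| < 1) (hr₂ : |r₂| < 1)
    -- the first factor of the integrand's denominator has minimum `(1 - |r₁|) ^ 2`, likewise the
    -- second, so this says that the denominator is positive everywhere
    (ht : 0 < (1 - |r₁|) * (1 - |r₂|) + t * ((1 + |r₁|) * (1 + |r₂|)))
    (c₁ c₂ m : ℝ) (hc₁ : c₁ = (1 - r₁) / (1 + r₁)) (hc₂ : c₂ = (1 - r₂) / (1 + r₂))
    (hm : m = 1 - ((c₂ / c₁ + t) * (c₁ / c₂ + t)) / ((1 / (c₁ * c₂) + t) * (c₁ * c₂ + t))) :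
    (0 ≤ m ↔ 0 ≤ t * (r₁ * r₂)) ∧ m < 1 ∧
    (1 / (2 * π) ^ 2) *
        ∫ l in 0..2 * π, ∫ ν in 0..2 * π,
          (1 - r₁ ^ 2) * (1 - r₂ ^ 2) /
            ((1 - 2 * r₁ * cos l + r₁ ^ 2) * (1 - 2 * r₂ * cos ν + r₂ ^ 2)
              + t * (1 - r₁ ^ 2) * (1 - r₂ ^ 2))
      = (2 / π) * (1 / √((c₁ * c₂ + t) * (1 / (c₁ * c₂) + t))) * completeEllipticK m := by
  obtain rfl : c₁ = halfAngleCoeff r₁ := hc₁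
  obtain rfl : c₂ = halfAngleCoeff r₂ := hc₂
  have hp := halfAngleCoeff_mul_add_pos hr₁ hr₂ ht
  have hq : 0 < halfAngleCoeff r₂ / halfAngleCoeff r₁ + t := by
    simpa only [halfAngleCoeff_neg, div_eq_inv_mul] using
      halfAngleCoeff_mul_add_pos (r₁ := -r₁) (by rwa [abs_neg]) hr₂ (by rwa [abs_neg])
  have hr : 0 < halfAngleCoeff r₁ / halfAngleCoeff r₂ + t := by
    simpa only [halfAngleCoeff_neg, div_eq_mul_inv] using
      halfAngleCoeff_mul_add_pos (r₂ := -r₂) hr₁ (by rwa [abs_neg]) (by rwa [abs_neg])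
  have hs : 0 < 1 / (halfAngleCoeff r₁ * halfAngleCoeff r₂) + t := by
    simpa only [halfAngleCoeff_neg, one_div, mul_inv] using
      halfAngleCoeff_mul_add_pos (r₁ := -r₁) (r₂ := -r₂) (by rwa [abs_neg]) (by rwa [abs_neg])
        (by rwa [abs_neg, abs_neg])
  have hr₁_sq : r₁ ^ 2 < 1 := (sq_lt_one_iff_abs_lt_one r₁).2 hr₁
  have hr₂_sq : r₂ ^ 2 < 1 := (sq_lt_one_iff_abs_lt_one r₂).2 hr₂
  rw [mul_comm (1 / _ + t)] at hm
  refine ⟨?_, ?_, ?_⟩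
  · have hR : 0 < 16 / ((1 - r₁ ^ 2) * (1 - r₂ ^ 2)) :=
      div_pos (by norm_num) (mul_pos (sub_pos.2 hr₁_sq) (sub_pos.2 hr₂_sq))
    rw [hm, sub_nonneg, div_le_one (mul_pos hp hs), ← sub_nonneg,
      halfAngleCoeff_mul_sub_mul hr₁_sq.ne hr₂_sq.ne, mul_nonneg_iff_of_pos_left hR]
  · rw [hm]
    exact sub_lt_self 1 (by positivity)
  · simp only [div_poisson_denom_mul_add hr₁_sq.ne hr₂_sq.ne]
    rw [integral_integral_inv_quadForm_div_two hp hq hr hs, hm]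
    field_simp
    norm_num

/-- For `0 ≤ r₁ < 1`, `0 ≤ r₂ < 1`, `t ≥ 0`, with
`c₁ = (1−r₁)/(1+r₁)`, `c₂ = (1−r₂)/(1+r₂)` and
`m = 1 − ((c₂/c₁ + t)(c₁/c₂ + t))/((1/(c₁c₂) + t)(c₁c₂ + t))`, one has `0 ≤ m < 1` and
`(1/(2π)²) ∫₀^{2π} ∫₀^{2π} (1−r₁²)(1−r₂²)/((1−2r₁cos λ+r₁²)(1−2r₂cos ν+r₂²)+t(1−r₁²)(1−r₂²)) dλ dν
  = (2/π) (1/√((c₁c₂+t)(1/(c₁c₂)+t))) K(m)`,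
where `K(m) = ∫₀^{π/2} dθ/√(1 − m sin²θ)` is the complete elliptic integral of the
first kind. -/
theorem stmt16 (r₁ r₂ t : ℝ) (hr₁0 : 0 ≤ r₁) (hr₁1 : r₁ < 1)
    (hr₂0 : 0 ≤ r₂) (hr₂1 : r₂ < 1) (ht : 0 ≤ t)
    (c₁ c₂ m : ℝ)
    (hc₁ : c₁ = (1 - r₁) / (1 + r₁)) (hc₂ : c₂ = (1 - r₂) / (1 + r₂))
    (hm : m = 1 - ((c₂ / c₁ + t) * (c₁ / c₂ + t)) / ((1 / (c₁ * c₂) + t) * (c₁ * c₂ + t))) :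
    (0 ≤ m ∧ m < 1) ∧
    (1 / (2 * Real.pi) ^ 2) *
        ∫ l in (0 : ℝ)..(2 * Real.pi), ∫ ν in (0 : ℝ)..(2 * Real.pi),
          (1 - r₁ ^ 2) * (1 - r₂ ^ 2) /
            ((1 - 2 * r₁ * Real.cos l + r₁ ^ 2) * (1 - 2 * r₂ * Real.cos ν + r₂ ^ 2)
              + t * (1 - r₁ ^ 2) * (1 - r₂ ^ 2))
      = (2 / Real.pi) * (1 / Real.sqrt ((c₁ * c₂ + t) * (1 / (c₁ * c₂) + t)))
          * ∫ θ in (0 : ℝ)..(Real.pi / 2), 1 / Real.sqrt (1 - m * Real.sin θ ^ 2) := by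
  have hr₁ : |r₁| < 1 := by rwa [abs_of_nonneg hr₁0]
  have hr₂ : |r₂| < 1 := by rwa [abs_of_nonneg hr₂0]
  obtain ⟨hm_nonneg_iff, hm_lt, hint⟩ := stmt16_general r₁ r₂ t hr₁ hr₂
    (add_pos_of_pos_of_nonneg (mul_pos (sub_pos.2 hr₁) (sub_pos.2 hr₂)) (by positivity))
    c₁ c₂ m hc₁ hc₂ hm
  exact ⟨⟨hm_nonneg_iff.2 (by positivity), hm_lt⟩, hint⟩
end
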